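/- Let Γ be a connected bipartite (δ_1,δ_2)-semiregular graph on n = n_1 + n_2 vertices with d+1 distinct eigenvalues, where d is even and m(0) ≠ |n_1 − n_2|. Then Γ is distance-biregular if and only if the single condition k̄_{1,d} + k̄_{2,d} = p_{1,d}(λ_0) + p_{2,d}(λ_0) holds. -/

import Mathlib

open Polynomial Finset Matrix

/-- The discrete scalar product `⟨f,g⟩ = ∑_{i∈s} w i · f(λ i) · g(λ i)` on a mesh. -/
def discInner (s : Finset ℕ) (lam w : ℕ → ℝ) (f g : Polynomial ℝ) : ℝ :=
  ∑ i ∈ s, w i * f.eval (lam i) * g.eval (lam i)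

/-- `Γ_i(u)`: the set of vertices at distance `i` from `u`. -/
noncomputable def sphere {V : Type*} [Fintype V] [DecidableEq V] (G : SimpleGraph V)
    (u : V) (i : ℕ) : Finset V :=
  Finset.univ.filter (fun v => G.dist u v = i)

/-- `Γ` (bipartite with stable sets `V₁, V₂`) is distance-biregular: it is
distance-regular around each vertex, and the intersection numbers
`c_i(u,v) = |Γ_{i−1}(u)∩Γ(v)|` and `b_i(u,v) = |Γ_{i+1}(u)∩Γ(v)|` (for `v ∈ Γ_i(u)`)
depend only on `i` and on the stable set containing `u`. -/
def IsDistBiregularOn {V : Type*} [Fintype V] [DecidableEq V] (G : SimpleGraph V)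
    [DecidableRel G.Adj] (V1 V2 : Finset V) : Prop :=
  ∃ c1 b1 c2 b2 : ℕ → ℕ,
    (∀ u ∈ V1, ∀ v : V,
      (sphere G u (G.dist u v - 1) ∩ G.neighborFinset v).card = c1 (G.dist u v) ∧
      (sphere G u (G.dist u v + 1) ∩ G.neighborFinset v).card = b1 (G.dist u v)) ∧
    (∀ u ∈ V2, ∀ v : V,
      (sphere G u (G.dist u v - 1) ∩ G.neighborFinset v).card = c2 (G.dist u v) ∧
      (sphere G u (G.dist u v + 1) ∩ G.neighborFinset v).card = b2 (G.dist u v))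

/-- `p 0, …, p d` is an orthogonal polynomial sequence for the discrete scalar product with
weights `w` on the mesh `lam 0 > ⋯ > lam d`, normalized by `‖p i‖² = p i (lam 0)`. -/
structure IsOrthoSeq (d : ℕ) (lam w : ℕ → ℝ) (p : ℕ → ℝ[X]) : Prop where
  degree_eq : ∀ i ≤ d, (p i).degree = (i : WithBot ℕ)
  orth : ∀ i ≤ d, ∀ j ≤ d, i ≠ j → discInner (range (d + 1)) lam w (p i) (p j) = 0
  norm : ∀ i ≤ d, discInner (range (d + 1)) lam w (p i) (p i) = (p i).eval (lam 0)

section DiscInner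

variable (s : Finset ℕ) (lam w : ℕ → ℝ)

theorem discInner_comm (f g : ℝ[X]) : discInner s lam w f g = discInner s lam w g f :=
  sum_congr rfl fun _ _ => by ring

theorem discInner_congr_right {f g h : ℝ[X]}
    (hgh : ∀ i ∈ s, g.eval (lam i) = h.eval (lam i)) :
    discInner s lam w f g = discInner s lam w f h :=
  sum_congr rfl fun i hi => by rw [hgh i hi]

theorem discInner_sum_right {ι : Type*} (t : Finset ι) (c : ι → ℝ) (f : ℝ[X]) (g : ι → ℝ[X]) :
    discInner s lam w f (∑ j ∈ t, C (c j) * g j) = ∑ j ∈ t, c j * discInner s lam w f (g j) := by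
  simp only [discInner, eval_finsetSum, eval_mul, eval_C, mul_sum]
  rw [sum_comm]
  exact sum_congr rfl fun _ _ => sum_congr rfl fun _ _ => by ring

theorem discInner_sum_left {ι : Type*} (t : Finset ι) (f : ι → ℝ[X]) (g : ℝ[X]) :
    discInner s lam w (∑ j ∈ t, f j) g = ∑ j ∈ t, discInner s lam w (f j) g := by
  simp only [discInner, eval_finsetSum, mul_sum, sum_mul]
  rw [sum_comm]

theorem discInner_X_mul (f g : ℝ[X]) :
    discInner s lam w (X * f) g = discInner s lam w f (X * g) :=
  sum_congr rfl fun _ _ => by simp only [eval_mul, eval_X]; ring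

end DiscInner

/-- Every polynomial agrees on the mesh with one of degree at most `d`. -/
theorem exists_degree_lt_eval_eq (d : ℕ) (lam : ℕ → ℝ) (f : ℝ[X]) :
    ∃ g : ℝ[X], g.degree < ((d + 1 : ℕ) : WithBot ℕ) ∧
      ∀ k ∈ range (d + 1), g.eval (lam k) = f.eval (lam k) := by
  have hM : (∏ i ∈ range (d + 1), (X - C (lam i))).Monic := monic_prod_X_sub_C _ _
  refine ⟨f %ₘ ∏ i ∈ range (d + 1), (X - C (lam i)), ?_, fun k hk => ?_⟩
  · refine (degree_modByMonic_lt f hM).trans_eq ?_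
    rw [degree_prod]
    simp
  · have h := congrArg (eval (lam k)) (modByMonic_add_div f (∏ i ∈ range (d + 1), (X - C (lam i))))
    have h0 : ∏ i ∈ range (d + 1), (X - C (lam i)).eval (lam k) = 0 :=
      prod_eq_zero hk (by rw [eval_sub, eval_X, eval_C, sub_self])
    rwa [eval_add, eval_mul, eval_prod, h0, zero_mul, add_zero] at h

/-- A sequence of polynomials with `deg (p i) = i` spans all polynomials. -/
theorem exists_expansion {d : ℕ} {p : ℕ → ℝ[X]}
    (hdeg : ∀ i ≤ d, (p i).degree = (i : WithBot ℕ)) (m : ℕ) (hm : m ≤ d + 1) (f : ℝ[X])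
    (hf : f.degree < (m : WithBot ℕ)) :
    ∃ c : ℕ → ℝ, f = ∑ j ∈ range m, C (c j) * p j := by
  induction m generalizing f with
  | zero => exact ⟨0, by simpa [Polynomial.degree_lt_iff_coeff_zero, Polynomial.ext_iff] using hf⟩
  | succ m ih =>
    have hpm := hdeg m (by omega)
    have hlc : (p m).coeff m ≠ 0 := coeff_ne_zero_of_eq_degree hpm
    obtain ⟨c, hc⟩ := ih (by omega) (f - C (f.coeff m / (p m).coeff m) * p m) (by
      rw [degree_lt_iff_coeff_zero]
      intro k hk
      rw [coeff_sub, coeff_C_mul]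
      rcases hk.eq_or_lt with rfl | hk
      · rw [div_mul_cancel₀ _ hlc, sub_self]
      · have h0 : (p m).coeff k = 0 :=
          coeff_eq_zero_of_degree_lt (by rw [hpm]; exact_mod_cast hk)
        rw [h0, (degree_lt_iff_coeff_zero _ _).1 hf k hk, mul_zero, sub_zero])
    refine ⟨Function.update c m (f.coeff m / (p m).coeff m), ?_⟩
    rw [sum_range_succ, Function.update_self, ← sub_eq_iff_eq_add, hc]
    exact sum_congr rfl fun j hj => by rw [Function.update_of_ne (mem_range.1 hj).ne]

namespace IsOrthoSeq

variable {d : ℕ} {lam w : ℕ → ℝ} {p : ℕ → ℝ[X]}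

theorem discInner_sum (hp : IsOrthoSeq d lam w p) (m : ℕ) (hm : m ≤ d + 1) (c : ℕ → ℝ)
    (i : ℕ) (hi : i ≤ d) :
    discInner (range (d + 1)) lam w (p i) (∑ j ∈ range m, C (c j) * p j) =
      if i < m then c i * discInner (range (d + 1)) lam w (p i) (p i) else 0 := by
  rw [discInner_sum_right]
  split_ifs with him
  · refine sum_eq_single_of_mem i (mem_range.2 him) fun j hj hji => ?_
    rw [hp.orth i hi j (by have := mem_range.1 hj; omega) hji.symm, mul_zero]
  · refine sum_eq_zero fun j hj => ?_
    have := mem_range.1 hj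
    rw [hp.orth i hi j (by omega) (by omega), mul_zero]

theorem discInner_eq_zero (hp : IsOrthoSeq d lam w p) {i : ℕ} (hi : i ≤ d) {f : ℝ[X]}
    (hf : f.degree < (i : WithBot ℕ)) : discInner (range (d + 1)) lam w (p i) f = 0 := by
  obtain ⟨c, rfl⟩ := exists_expansion hp.degree_eq i (by omega) f hf
  rw [hp.discInner_sum i (by omega) c i hi, if_neg (lt_irrefl i)]

/-- The sum of the sequence reproduces evaluation at `lam 0`. -/
theorem discInner_sum_eq_eval (hp : IsOrthoSeq d lam w p) {f : ℝ[X]}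
    (hf : f.degree < ((d + 1 : ℕ) : WithBot ℕ)) :
    discInner (range (d + 1)) lam w (∑ j ∈ range (d + 1), p j) f = f.eval (lam 0) := by
  obtain ⟨c, rfl⟩ := exists_expansion hp.degree_eq (d + 1) le_rfl f hf
  rw [discInner_sum_left, eval_finsetSum]
  refine sum_congr rfl fun j hj => ?_
  have hj' := mem_range.1 hj
  rw [hp.discInner_sum (d + 1) le_rfl c j (by omega), if_pos hj', hp.norm j (by omega), eval_mul,
    eval_C]

/-- The sum of the sequence is the Hoffman polynomial. -/
theorem weight_mul_eval_sum (hp : IsOrthoSeq d lam w p) (hlam : Set.InjOn lam (Set.Iic d))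
    {k : ℕ} (hk : k ≤ d) :
    w k * (∑ j ∈ range (d + 1), p j).eval (lam k) = if k = 0 then 1 else 0 := by
  have hinj : Set.InjOn lam (range (d + 1)) := hlam.mono fun i hi =>
    Nat.lt_succ_iff.1 (mem_range.1 hi)
  have hmem : k ∈ range (d + 1) := by simpa [Nat.lt_succ_iff] using hk
  have hb : (Lagrange.basis (range (d + 1)) lam k).degree < ((d + 1 : ℕ) : WithBot ℕ) := by
    rw [Lagrange.degree_basis hinj hmem, card_range]
    exact_mod_cast Nat.lt_succ_self d
  have h := hp.discInner_sum_eq_eval hb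
  rw [discInner, sum_eq_single_of_mem k hmem, Lagrange.eval_basis_self hinj hmem, mul_one] at h
  · rw [h]
    split_ifs with hk0
    · rw [hk0] at hmem ⊢
      exact Lagrange.eval_basis_self hinj hmem
    · exact Lagrange.eval_basis_of_ne hk0 (by simp)
  · intro j hj hjk
    rw [Lagrange.eval_basis_of_ne hjk.symm hj, mul_zero]

theorem discInner_self_pos (hp : IsOrthoSeq d lam w p) (hlam : Set.InjOn lam (Set.Iic d))
    (hw : ∀ k ≤ d, 0 < w k) {i : ℕ} (hi : i ≤ d) :
    0 < discInner (range (d + 1)) lam w (p i) (p i) := by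
  have hnonneg : ∀ k ∈ range (d + 1), 0 ≤ w k * (p i).eval (lam k) * (p i).eval (lam k) :=
    fun k hk => by
      rw [mul_assoc]
      exact mul_nonneg (hw k (by have := mem_range.1 hk; omega)).le (mul_self_nonneg _)
  refine (sum_nonneg hnonneg).lt_of_ne fun h0 => ?_
  have hz := (sum_eq_zero_iff_of_nonneg hnonneg).1 h0.symm
  have hp0 : p i = 0 := by
    refine eq_zero_of_degree_lt_of_eval_index_eq_zero (range (d + 1))
      (hlam.mono fun j hj => Nat.lt_succ_iff.1 (mem_range.1 hj)) ?_ fun k hk => ?_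
    · rw [hp.degree_eq i hi, card_range]
      exact_mod_cast Nat.lt_succ_of_le hi
    · simpa [(hw k (by have := mem_range.1 hk; omega)).ne'] using hz k hk
  simpa [hp0] using hp.degree_eq i hi

theorem discInner_X_mul_ne_zero (hp : IsOrthoSeq d lam w p) (hlam : Set.InjOn lam (Set.Iic d))
    (hw : ∀ k ≤ d, 0 < w k) {i : ℕ} (hi : i < d) :
    discInner (range (d + 1)) lam w (p (i + 1)) (X * p i) ≠ 0 := by
  have hdeg : (X * p i).degree = ((i + 1 : ℕ) : WithBot ℕ) := by
    rw [degree_mul, degree_X, hp.degree_eq i hi.le, add_comm]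
    rfl
  obtain ⟨c, hc⟩ := exists_expansion hp.degree_eq (i + 2) (by omega) (X * p i) (by
    rw [hdeg]
    exact_mod_cast Nat.lt_succ_self _)
  rw [hc, hp.discInner_sum _ (by omega) c _ (by omega), if_pos (by omega)]
  refine mul_ne_zero (fun h0 => ?_) (hp.discInner_self_pos hlam hw (by omega)).ne'
  have hlt : (∑ j ∈ range (i + 1), C (c j) * p j).degree < ((i + 1 : ℕ) : WithBot ℕ) := by
    rw [← mem_degreeLT]
    refine sum_mem fun j hj => ?_
    have hj' := mem_range.1 hj
    rw [← smul_eq_C_mul]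
    refine Submodule.smul_mem _ _ (mem_degreeLT.2 ?_)
    rw [hp.degree_eq j (by omega)]
    exact_mod_cast hj'
  rw [sum_range_succ, h0, C_0, zero_mul, add_zero] at hc
  rw [← hc, hdeg] at hlt
  exact lt_irrefl _ hlt

/-- Backward recurrence: on the mesh, `p i` is a combination of `X * p (i + 1)` and the `p j` with
`j > i`. -/
theorem exists_backward (hp : IsOrthoSeq d lam w p) (hlam : Set.InjOn lam (Set.Iic d))
    (hw : ∀ k ≤ d, 0 < w k) {i : ℕ} (hi : i < d) :
    ∃ (a : ℝ) (c : ℕ → ℝ), a ≠ 0 ∧ ∀ k ∈ range (d + 1),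
      (C a * p i + ∑ j ∈ Ioc i d, C (c j) * p j).eval (lam k) = (X * p (i + 1)).eval (lam k) := by
  obtain ⟨g, hg, hgk⟩ := exists_degree_lt_eval_eq d lam (X * p (i + 1))
  obtain ⟨c, rfl⟩ := exists_expansion hp.degree_eq (d + 1) le_rfl g hg
  have hcoef : ∀ j ≤ d, c j * discInner (range (d + 1)) lam w (p j) (p j) =
      discInner (range (d + 1)) lam w (p (i + 1)) (X * p j) := fun j hj => by
    rw [← discInner_X_mul, discInner_comm _ _ _ (X * _), ← discInner_congr_right _ _ _ hgk,
      hp.discInner_sum _ le_rfl c j hj, if_pos (by omega)]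
  have hzero : ∀ j < i, c j = 0 := fun j hj => by
    have hdeg : (X * p j).degree < ((i + 1 : ℕ) : WithBot ℕ) := by
      rw [degree_mul, degree_X, hp.degree_eq j (by omega), add_comm]
      exact_mod_cast Nat.succ_lt_succ hj
    have hjd : j ≤ d := by omega
    have h := hcoef j hjd
    rw [hp.discInner_eq_zero (by omega) hdeg] at h
    exact (mul_eq_zero.1 h).resolve_right (hp.discInner_self_pos hlam hw hjd).ne'
  refine ⟨c i, c, fun h0 => ?_, fun k hk => ?_⟩
  · have h := hcoef i hi.le
    rw [h0, zero_mul] at h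
    exact hp.discInner_X_mul_ne_zero hlam hw hi h.symm
  · rw [← hgk k hk]
    congr 1
    have hsub : insert i (Ioc i d) ⊆ range (d + 1) := by
      intro j hj
      simp only [mem_insert, mem_Ioc, mem_range] at hj ⊢
      omega
    rw [← sum_subset hsub, sum_insert (by simp)]
    intro j hj hj'
    simp only [mem_insert, mem_Ioc, mem_range] at hj hj'
    rw [hzero j (by omega), C_0, zero_mul]

end IsOrthoSeq

/-- `A` has distinct eigenvalues `lam 0 > ⋯ > lam d` with spectral idempotents `E 0, …, E d`. -/
structure IsSpectralResolution {V : Type*} [Fintype V] [DecidableEq V] (A : Matrix V V ℝ) (d : ℕ)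
    (lam : ℕ → ℝ) (E : ℕ → Matrix V V ℝ) : Prop where
  anti : StrictAntiOn lam (Set.Iic d)
  symm : ∀ i ≤ d, (E i).IsSymm
  sum : ∑ i ∈ range (d + 1), E i = 1
  mul : ∀ i ≤ d, ∀ j ≤ d, E i * E j = if i = j then E i else 0
  eig : ∀ i ≤ d, A * E i = lam i • E i
  ne_zero : ∀ i ≤ d, E i ≠ 0

namespace IsSpectralResolution

variable {V : Type*} [Fintype V] [DecidableEq V] {A : Matrix V V ℝ} {d : ℕ} {lam : ℕ → ℝ}
  {E : ℕ → Matrix V V ℝ}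

theorem aeval_mul_idempotent (h : IsSpectralResolution A d lam E) (f : ℝ[X]) {i : ℕ} (hi : i ≤ d) :
    aeval A f * E i = f.eval (lam i) • E i := by
  have hpow : ∀ k : ℕ, A ^ k * E i = lam i ^ k • E i := by
    intro k
    induction k with
    | zero => simp
    | succ k ih => rw [pow_succ, mul_assoc, h.eig i hi, mul_smul_comm, ih, smul_smul, pow_succ']
  rw [aeval_eq_sum_range, eval_eq_sum_range, sum_mul, sum_smul]
  exact sum_congr rfl fun k _ => by rw [smul_mul_assoc, hpow, smul_smul]

theorem aeval_eq (h : IsSpectralResolution A d lam E) (f : ℝ[X]) :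
    aeval A f = ∑ i ∈ range (d + 1), f.eval (lam i) • E i := by
  rw [← mul_one (aeval A f), ← h.sum, mul_sum]
  exact sum_congr rfl fun i hi => h.aeval_mul_idempotent f (Nat.lt_succ_iff.1 (mem_range.1 hi))

theorem aeval_apply (h : IsSpectralResolution A d lam E) (f : ℝ[X]) (u v : V) :
    aeval A f u v = ∑ i ∈ range (d + 1), f.eval (lam i) * E i u v := by
  rw [h.aeval_eq, Matrix.sum_apply]
  rfl

theorem aeval_congr (h : IsSpectralResolution A d lam E) {f g : ℝ[X]}
    (hfg : ∀ k ∈ range (d + 1), f.eval (lam k) = g.eval (lam k)) : aeval A f = aeval A g := by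
  rw [h.aeval_eq, h.aeval_eq]
  exact sum_congr rfl fun k hk => by rw [hfg k hk]

theorem aeval_symm (h : IsSpectralResolution A d lam E) (f : ℝ[X]) (u v : V) :
    aeval A f u v = aeval A f v u := by
  rw [h.aeval_apply, h.aeval_apply]
  exact sum_congr rfl fun k hk => by rw [(h.symm k (Nat.lt_succ_iff.1 (mem_range.1 hk))).apply]

theorem idempotent_mul (h : IsSpectralResolution A d lam E) (hA : A.IsSymm) {i : ℕ} (hi : i ≤ d) :
    E i * A = lam i • E i := by
  have := congrArg Matrix.transpose (h.eig i hi)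
  rwa [transpose_mul, transpose_smul, hA, h.symm i hi] at this

theorem diag_eq_sum_sq (h : IsSpectralResolution A d lam E) {i : ℕ} (hi : i ≤ d) (u : V) :
    E i u u = ∑ v, E i u v ^ 2 := by
  have hmul := h.mul i hi i hi
  rw [if_pos rfl] at hmul
  rw [← congrFun (congrFun hmul u) u, mul_apply]
  exact sum_congr rfl fun v _ => by rw [(h.symm i hi).apply u v, sq]

/-- The scalar product with weights averaged over `S`, in terms of the rows indexed by `S`. -/
theorem sum_aeval_mul_aeval (h : IsSpectralResolution A d lam E) {S : Finset V} (hS : S.Nonempty)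
    (f g : ℝ[X]) :
    ∑ u ∈ S, ∑ v, aeval A f u v * aeval A g u v =
      S.card * discInner (range (d + 1)) lam (fun i => (∑ u ∈ S, E i u u) / S.card) f g := by
  have hrow : ∀ u, ∑ v, aeval A f u v * aeval A g u v =
      ∑ i ∈ range (d + 1), f.eval (lam i) * g.eval (lam i) * E i u u := fun u => by
    simp_rw [h.aeval_symm g u, ← mul_apply, ← map_mul, h.aeval_apply, eval_mul]
  have hcard : (S.card : ℝ) ≠ 0 := by exact_mod_cast hS.card_pos.ne'
  simp_rw [hrow]
  rw [sum_comm, discInner, mul_sum]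
  refine sum_congr rfl fun i _ => ?_
  rw [← mul_sum]
  field_simp

end IsSpectralResolution

/-- `V1` and `V2` are the stable sets of a `(δ1, δ2)`-semiregular bipartite graph. -/
structure IsSemiregularBipartition {V : Type*} [Fintype V] [DecidableEq V] (G : SimpleGraph V)
    [DecidableRel G.Adj] (V1 V2 : Finset V) (δ1 δ2 : ℕ) : Prop where
  cover : V1 ∪ V2 = Finset.univ
  disj : Disjoint V1 V2
  indep_left : ∀ u ∈ V1, ∀ v ∈ V1, ¬ G.Adj u v
  indep_right : ∀ u ∈ V2, ∀ v ∈ V2, ¬ G.Adj u v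
  degree_left : ∀ u ∈ V1, G.degree u = δ1
  degree_right : ∀ v ∈ V2, G.degree v = δ2

namespace IsSemiregularBipartition

variable {V : Type*} [Fintype V] [DecidableEq V] {G : SimpleGraph V} [DecidableRel G.Adj]
  {V1 V2 : Finset V} {δ1 δ2 : ℕ} {d : ℕ} {lam : ℕ → ℝ} {E : ℕ → Matrix V V ℝ}

theorem swap (hB : IsSemiregularBipartition G V1 V2 δ1 δ2) :
    IsSemiregularBipartition G V2 V1 δ2 δ1 where
  cover := by rw [union_comm]; exact hB.cover
  disj := hB.disj.symm
  indep_left := hB.indep_right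
  indep_right := hB.indep_left
  degree_left := hB.degree_right
  degree_right := hB.degree_left

theorem mem_right_iff (hB : IsSemiregularBipartition G V1 V2 δ1 δ2) (v : V) :
    v ∈ V2 ↔ v ∉ V1 := by
  have hv : v ∈ V1 ∪ V2 := hB.cover ▸ mem_univ v
  exact ⟨fun h2 h1 => disjoint_left.1 hB.disj h1 h2, (mem_union.1 hv).resolve_left⟩

theorem adj_mem_iff (hB : IsSemiregularBipartition G V1 V2 δ1 δ2) {u v : V} (h : G.Adj u v) :
    u ∈ V1 ↔ v ∉ V1 := by
  refine ⟨fun hu hv => hB.indep_left u hu v hv h, fun hv => ?_⟩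
  by_contra hu
  exact hB.indep_right u ((hB.mem_right_iff u).2 hu) v ((hB.mem_right_iff v).2 hv) h

theorem even_length_iff (hB : IsSemiregularBipartition G V1 V2 δ1 δ2) {u v : V} (q : G.Walk u v) :
    Even q.length ↔ (u ∈ V1 ↔ v ∈ V1) := by
  induction q with
  | nil => simp
  | cons h q ih =>
    have := hB.adj_mem_iff h
    rw [SimpleGraph.Walk.length_cons, Nat.even_add_one]
    tauto

theorem even_dist_iff (hB : IsSemiregularBipartition G V1 V2 δ1 δ2) (hconn : G.Connected)
    (u v : V) : Even (G.dist u v) ↔ (u ∈ V1 ↔ v ∈ V1) := by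
  obtain ⟨q, hq⟩ := hconn.exists_walk_length_eq_dist u v
  rw [← hq, hB.even_length_iff]

theorem sum_univ (hB : IsSemiregularBipartition G V1 V2 δ1 δ2) (f : V → ℝ) :
    ∑ v, f v = ∑ v ∈ V1, f v + ∑ v ∈ V2, f v := by
  rw [← hB.cover, sum_union hB.disj]

theorem sum_diag_left_eq_right (hB : IsSemiregularBipartition G V1 V2 δ1 δ2)
    (h : IsSpectralResolution (G.adjMatrix ℝ) d lam E) {i : ℕ} (hi : i ≤ d) (h0 : lam i ≠ 0) :
    ∑ u ∈ V1, E i u u = ∑ v ∈ V2, E i v v := by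
  have key : ∀ {W1 W2 : Finset V} {ε1 ε2 : ℕ}, IsSemiregularBipartition G W1 W2 ε1 ε2 →
      lam i * ∑ u ∈ W1, E i u u = ∑ u ∈ W1, ∑ w ∈ W2, G.adjMatrix ℝ u w * E i u w := by
    intro W1 W2 _ _ hW
    rw [mul_sum]
    refine sum_congr rfl fun u hu => ?_
    have he : lam i * E i u u = (G.adjMatrix ℝ * E i) u u := by
      rw [h.eig i hi]
      rfl
    rw [he, mul_apply, hW.sum_univ, sum_eq_zero fun w hw => ?_, zero_add]
    · exact sum_congr rfl fun w _ => by rw [(h.symm i hi).apply]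
    · rw [SimpleGraph.adjMatrix_apply, if_neg (hW.indep_left u hu w hw), zero_mul]
  refine mul_left_cancel₀ h0 ?_
  rw [key hB, key hB.swap, sum_comm]
  exact sum_congr rfl fun v _ => sum_congr rfl fun u _ => by
    rw [(h.symm i hi).apply, G.isSymm_adjMatrix.apply]

theorem left_nonempty (hB : IsSemiregularBipartition G V1 V2 δ1 δ2)
    (h : IsSpectralResolution (G.adjMatrix ℝ) d lam E)
    (hm0 : ∑ i ∈ (range (d + 1)).filter (fun i => lam i = 0), trace (E i) ≠
      |(V1.card : ℝ) - (V2.card : ℝ)|) : V1.Nonempty := by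
  rw [nonempty_iff_ne_empty]
  rintro rfl
  have hV2 : V2 = Finset.univ := by simpa using hB.cover
  have hA : G.adjMatrix ℝ = 0 := by
    ext u v
    rw [SimpleGraph.adjMatrix_apply, if_neg (hB.indep_right u (by simp [hV2]) v (by simp [hV2]))]
    rfl
  apply hm0
  rw [filter_true_of_mem, ← trace_sum, h.sum, hV2]
  · simp
  · intro i hi
    have hi' : i ≤ d := Nat.lt_succ_iff.1 (mem_range.1 hi)
    have := h.eig i hi'
    rw [hA, zero_mul, eq_comm, smul_eq_zero] at this
    exact this.resolve_right (h.ne_zero i hi')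

theorem sum_diag_pos (hB : IsSemiregularBipartition G V1 V2 δ1 δ2)
    (h : IsSpectralResolution (G.adjMatrix ℝ) d lam E)
    (hm0 : ∑ i ∈ (range (d + 1)).filter (fun i => lam i = 0), trace (E i) ≠
      |(V1.card : ℝ) - (V2.card : ℝ)|) {i : ℕ} (hi : i ≤ d) : 0 < ∑ u ∈ V1, E i u u := by
  have hdiag : ∀ u, 0 ≤ E i u u := fun u => by
    rw [h.diag_eq_sum_sq hi]
    positivity
  refine (sum_nonneg fun u _ => hdiag u).lt_of_ne fun hzero => ?_
  have hrow : ∀ u ∈ V1, ∀ w, E i u w = 0 := fun u hu w => by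
    have h0 := (sum_eq_zero_iff_of_nonneg fun u _ => hdiag u).1 hzero.symm u hu
    rw [h.diag_eq_sum_sq hi, sum_eq_zero_iff_of_nonneg fun _ _ => sq_nonneg _] at h0
    exact pow_eq_zero_iff two_ne_zero |>.1 (h0 w (mem_univ w))
  by_cases hl : lam i = 0
  · apply hm0
    have hfilter : (range (d + 1)).filter (fun j => lam j = 0) = {i} := by
      ext j
      simp only [mem_filter, mem_range, mem_singleton]
      refine ⟨fun hj => h.anti.injOn (Nat.lt_succ_iff.1 hj.1) hi (hj.2.trans hl.symm), ?_⟩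
      rintro rfl
      exact ⟨Nat.lt_succ_of_le hi, hl⟩
    have htrace : trace (E i) = ∑ v ∈ V2, E i v v := by
      rw [trace, hB.sum_univ]
      simp only [diag_apply]
      rw [← hzero, zero_add]
    have hcard : ∀ S : Finset V, (S.card : ℝ) = ∑ j ∈ range (d + 1), ∑ u ∈ S, E j u u := by
      intro S
      rw [sum_comm, card_eq_sum_ones, Nat.cast_sum]
      refine sum_congr rfl fun u _ => ?_
      rw [← Matrix.sum_apply, h.sum, one_apply_eq, Nat.cast_one]
    have hdiff : (V1.card : ℝ) - V2.card = -trace (E i) := by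
      rw [hcard, hcard, ← sum_sub_distrib, sum_eq_single i, ← hzero, htrace, zero_sub]
      · intro j hj hji
        have hj' : j ≤ d := Nat.lt_succ_iff.1 (mem_range.1 hj)
        rw [hB.sum_diag_left_eq_right h hj', sub_self]
        exact fun h0 => hji (h.anti.injOn hj' hi (h0.trans hl.symm))
      · exact fun hn => absurd (mem_range.2 (Nat.lt_succ_of_le hi)) hn
    rw [hfilter, sum_singleton, hdiff, abs_neg, abs_of_nonneg]
    exact sum_nonneg fun u _ => hdiag u
  · refine h.ne_zero i hi ?_
    ext v w
    by_cases hv : v ∈ V1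
    · exact hrow v hv w
    · have he : lam i * E i v w = (G.adjMatrix ℝ * E i) v w := by
        rw [h.eig i hi]
        rfl
      rw [SimpleGraph.adjMatrix_mul_apply, sum_eq_zero] at he
      · exact (mul_eq_zero.1 he).resolve_left hl
      · intro u hu
        rw [SimpleGraph.mem_neighborFinset] at hu
        exact hrow u ((hB.adj_mem_iff hu.symm).2 hv) w

/-- The idempotent of the largest eigenvalue of a connected semiregular bipartite graph is
constant on each block. -/
theorem exists_perron (hB : IsSemiregularBipartition G V1 V2 δ1 δ2) (hconn : G.Connected)
    (h : IsSpectralResolution (G.adjMatrix ℝ) d lam E) (hV1 : V1.Nonempty) (hV2 : V2.Nonempty) :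
    ∃ α β : ℝ, α ≠ 0 ∧ β ≠ 0 ∧ (∀ u ∈ V1, ∀ v ∈ V1, E 0 u v = α) ∧
      ∀ u ∈ V1, ∀ v ∉ V1, E 0 u v = β := by
  obtain ⟨u₁, hu₁⟩ := hV1
  obtain ⟨u₂, hu₂⟩ := hV2
  have : Nontrivial V := ⟨u₁, u₂, fun he => (hB.mem_right_iff u₂).1 hu₂ (he ▸ hu₁)⟩
  have hδ1 : 0 < δ1 := by
    rw [← hB.degree_left u₁ hu₁]
    exact hconn.preconnected.degree_pos_of_nontrivial u₁
  have hδ2 : 0 < δ2 := by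
    rw [← hB.degree_right u₂ hu₂]
    exact hconn.preconnected.degree_pos_of_nontrivial u₂
  obtain ⟨r, hr, hr2⟩ : ∃ r : ℝ, 0 < r ∧ r ^ 2 = δ1 :=
    ⟨√δ1, by positivity, Real.sq_sqrt (by positivity)⟩
  obtain ⟨s, hs, hs2⟩ : ∃ s : ℝ, 0 < s ∧ s ^ 2 = δ2 :=
    ⟨√δ2, by positivity, Real.sq_sqrt (by positivity)⟩
  have hdeg : ∀ u, (G.degree u : ℝ) = if u ∈ V1 then r ^ 2 else s ^ 2 := fun u => by
    split_ifs with hu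
    · rw [hB.degree_left u hu, hr2]
    · rw [hB.degree_right u ((hB.mem_right_iff u).2 hu), hs2]
  -- `r * s` is an eigenvalue, with eigenvector `r` on `V1` and `s` on `V2`.
  have hle : r * s ≤ lam 0 := by
    by_contra! hlt
    have hν : G.adjMatrix ℝ *ᵥ (fun u => if u ∈ V1 then r else s) =
        (r * s) • fun u => if u ∈ V1 then r else s := by
      ext u
      have hnbr : ∀ w ∈ G.neighborFinset u,
          (if w ∈ V1 then r else s) = if u ∈ V1 then s else r := fun w hw => by
        have := hB.adj_mem_iff ((SimpleGraph.mem_neighborFinset _ _ _).1 hw)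
        by_cases hu : u ∈ V1 <;> simp_all
      rw [SimpleGraph.adjMatrix_mulVec_apply, sum_congr rfl hnbr, sum_const,
        SimpleGraph.card_neighborFinset_eq_degree, nsmul_eq_mul, hdeg]
      simp only [Pi.smul_apply, smul_eq_mul]
      split_ifs <;> ring
    have hE : ∀ i ∈ range (d + 1), E i *ᵥ (fun u => if u ∈ V1 then r else s) = 0 := by
      intro i hi
      have hi' : i ≤ d := Nat.lt_succ_iff.1 (mem_range.1 hi)
      have he := congrArg (fun x => E i *ᵥ x) hν
      simp only [mulVec_mulVec, mulVec_smul] at he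
      rw [h.idempotent_mul G.isSymm_adjMatrix hi', smul_mulVec, ← sub_eq_zero, ← sub_smul,
        smul_eq_zero] at he
      refine he.resolve_left (sub_ne_zero.2 (ne_of_lt (lt_of_le_of_lt ?_ hlt)))
      exact h.anti.antitoneOn (Nat.zero_le d) hi' (Nat.zero_le i)
    have h1 := congrArg (fun M => M *ᵥ (fun u => if u ∈ V1 then r else s)) h.sum
    simp only [sum_mulVec, one_mulVec] at h1
    rw [sum_eq_zero hE] at h1
    have := congrFun h1 u₁
    rw [if_pos hu₁] at this
    exact hr.ne this
  set t : V → ℝ := fun u => if u ∈ V1 then s else r with ht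
  have htdeg : ∀ u, t u ^ 2 * G.degree u = (r * s) ^ 2 := fun u => by
    rw [hdeg, ht]
    dsimp only
    split_ifs <;> ring
  have htadj : ∀ u v, G.Adj u v → t u * t v = r * s := fun u v huv => by
    have := hB.adj_mem_iff huv
    by_cases hu : u ∈ V1 <;> simp_all [mul_comm]
  have hedge : ∀ w u v, G.Adj u v → t u * E 0 u w = t v * E 0 v w := by
    intro w
    have hquad : ∑ u, ∑ v, G.adjMatrix ℝ u v * (t u * E 0 u w - t v * E 0 v w) ^ 2 =
        2 * (r * s) * (r * s - lam 0) * ∑ u, E 0 u w ^ 2 := by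
      have h1 : ∀ u, ∑ v, G.adjMatrix ℝ u v * (t u * E 0 u w) ^ 2 = (r * s) ^ 2 * E 0 u w ^ 2 :=
        fun u => by
          rw [← sum_mul, ← htdeg, ← SimpleGraph.card_neighborFinset_eq_degree,
            SimpleGraph.neighborFinset_eq_filter, card_filter]
          simp only [SimpleGraph.adjMatrix_apply]
          push_cast
          ring
      have h2 : ∀ u, ∑ v, G.adjMatrix ℝ u v * ((t u * E 0 u w) * (t v * E 0 v w)) =
          r * s * lam 0 * E 0 u w ^ 2 := fun u => by
        have he : lam 0 * E 0 u w = (G.adjMatrix ℝ * E 0) u w := by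
          rw [h.eig 0 (Nat.zero_le d)]
          rfl
        have h3 : r * s * lam 0 * E 0 u w ^ 2 = r * s * E 0 u w * (lam 0 * E 0 u w) := by ring
        rw [h3, he, mul_apply, mul_sum]
        refine sum_congr rfl fun v _ => ?_
        rw [SimpleGraph.adjMatrix_apply]
        split_ifs with huv
        · rw [← htadj u v huv]
          ring
        · ring
      have h4 : ∑ u, ∑ v, G.adjMatrix ℝ u v * (t v * E 0 v w) ^ 2 =
          ∑ u, ∑ v, G.adjMatrix ℝ u v * (t u * E 0 u w) ^ 2 := by
        rw [sum_comm]
        exact sum_congr rfl fun _ _ => sum_congr rfl fun _ _ => by rw [G.isSymm_adjMatrix.apply]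
      have h5 : ∑ u, ∑ v, G.adjMatrix ℝ u v * (t u * E 0 u w - t v * E 0 v w) ^ 2 =
          ∑ u, ∑ v, G.adjMatrix ℝ u v * (t u * E 0 u w) ^ 2 +
          ∑ u, ∑ v, G.adjMatrix ℝ u v * (t v * E 0 v w) ^ 2 -
          2 * ∑ u, ∑ v, G.adjMatrix ℝ u v * ((t u * E 0 u w) * (t v * E 0 v w)) := by
        simp only [mul_sum, ← sum_add_distrib, ← sum_sub_distrib]
        exact sum_congr rfl fun _ _ => sum_congr rfl fun _ _ => by ring
      rw [h5, h4]
      simp only [h1, h2, ← mul_sum]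
      ring
    have hterm : ∀ u v, 0 ≤ G.adjMatrix ℝ u v * (t u * E 0 u w - t v * E 0 v w) ^ 2 :=
      fun u v => mul_nonneg (by rw [SimpleGraph.adjMatrix_apply]; split_ifs <;> norm_num)
        (sq_nonneg _)
    have hnonpos : ∑ u, ∑ v, G.adjMatrix ℝ u v * (t u * E 0 u w - t v * E 0 v w) ^ 2 ≤ 0 := by
      rw [hquad]
      exact mul_nonpos_of_nonpos_of_nonneg
        (mul_nonpos_of_nonneg_of_nonpos (by positivity) (by linarith))
        (sum_nonneg fun _ _ => sq_nonneg _)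
    intro u v huv
    have hz := le_antisymm hnonpos (sum_nonneg fun u _ => sum_nonneg fun v _ => hterm u v)
    rw [sum_eq_zero_iff_of_nonneg fun u _ => sum_nonneg fun v _ => hterm u v] at hz
    have hz' := (sum_eq_zero_iff_of_nonneg fun v _ => hterm u v).1 (hz u (mem_univ u)) v
      (mem_univ v)
    rw [SimpleGraph.adjMatrix_apply, if_pos huv, one_mul, sq_eq_zero_iff] at hz'
    exact sub_eq_zero.1 hz'
  have hconst : ∀ w u v, t u * E 0 u w = t v * E 0 v w := by
    intro w u v
    obtain ⟨q⟩ := hconn.preconnected u v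
    induction q with
    | nil => rfl
    | cons huv _ ih => exact (hedge w _ _ huv).trans ih
  have htpos : ∀ u, 0 < t u := fun u => by
    simp only [ht]
    split_ifs <;> assumption
  have hE : ∀ u v, t u * t v * E 0 u v = t u₁ * t u₁ * E 0 u₁ u₁ := fun u v => by
    have h1 := hconst v u u₁
    have h2 := hconst u₁ v u₁
    rw [(h.symm 0 (Nat.zero_le d)).apply] at h2
    linear_combination t v * h1 + t u₁ * h2
  have h0 : E 0 u₁ u₁ ≠ 0 := fun h0 => h.ne_zero 0 (Nat.zero_le d) <| by
    ext u v
    have := hE u v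
    rw [h0, mul_zero] at this
    exact (mul_eq_zero.1 this).resolve_left (mul_pos (htpos u) (htpos v)).ne'
  refine ⟨E 0 u₁ u₁, s / r * E 0 u₁ u₁, h0, mul_ne_zero (by positivity) h0, ?_, ?_⟩
  · intro u hu v hv
    have := hE u v
    simp only [ht, if_pos hu, if_pos hv, if_pos hu₁] at this
    exact mul_left_cancel₀ (by positivity) this
  · intro u hu v hv
    have := hE u v
    simp only [ht, if_pos hu, if_neg hv, if_pos hu₁] at this
    field_simp
    refine mul_left_cancel₀ hs.ne' ?_
    linear_combination this

end IsSemiregularBipartition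

section WalkMatrix

variable {V : Type*} [Fintype V] [DecidableEq V] (G : SimpleGraph V) [DecidableRel G.Adj]

theorem adjMatrix_pow_apply_eq_zero {k : ℕ} {u v : V} (h : k < G.dist u v) :
    (G.adjMatrix ℝ ^ k) u v = 0 := by
  rw [SimpleGraph.adjMatrix_pow_apply_eq_card_walk, Nat.cast_eq_zero, Fintype.card_eq_zero_iff]
  exact ⟨fun q => (G.dist_le q.1).not_gt (by rw [q.2]; exact h)⟩

theorem adjMatrix_pow_dist_pos (hconn : G.Connected) (u v : V) :
    0 < (G.adjMatrix ℝ ^ G.dist u v) u v := by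
  obtain ⟨q, hq⟩ := hconn.exists_walk_length_eq_dist u v
  rw [SimpleGraph.adjMatrix_pow_apply_eq_card_walk, Nat.cast_pos, Fintype.card_pos_iff]
  exact ⟨⟨q, hq⟩⟩

theorem aeval_adjMatrix_apply_eq_zero {f : ℝ[X]} {u v : V}
    (h : f.degree < (G.dist u v : WithBot ℕ)) : aeval (G.adjMatrix ℝ) f u v = 0 := by
  rw [aeval_eq_sum_range, Matrix.sum_apply]
  refine sum_eq_zero fun k _ => ?_
  rw [Matrix.smul_apply]
  by_cases hk : k < G.dist u v
  · rw [adjMatrix_pow_apply_eq_zero G hk, smul_zero]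
  · rw [(degree_lt_iff_coeff_zero _ _).1 h k (not_lt.1 hk), zero_smul]

end WalkMatrix

/-- `G` is distance-regular around each vertex of `S`, with a common intersection array. -/
def IsDistRegularAround {V : Type*} [Fintype V] [DecidableEq V] (G : SimpleGraph V)
    [DecidableRel G.Adj] (S : Finset V) : Prop :=
  ∃ c b : ℕ → ℕ, ∀ u ∈ S, ∀ v : V,
    (sphere G u (G.dist u v - 1) ∩ G.neighborFinset v).card = c (G.dist u v) ∧
    (sphere G u (G.dist u v + 1) ∩ G.neighborFinset v).card = b (G.dist u v)

theorem isDistBiregularOn_iff {V : Type*} [Fintype V] [DecidableEq V] (G : SimpleGraph V)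
    [DecidableRel G.Adj] (V1 V2 : Finset V) :
    IsDistBiregularOn G V1 V2 ↔ IsDistRegularAround G V1 ∧ IsDistRegularAround G V2 :=
  ⟨fun ⟨c1, b1, c2, b2, h1, h2⟩ => ⟨⟨c1, b1, h1⟩, ⟨c2, b2, h2⟩⟩,
    fun ⟨⟨c1, b1, h1⟩, ⟨c2, b2, h2⟩⟩ => ⟨c1, b1, c2, b2, h1, h2⟩⟩

namespace IsSemiregularBipartition

variable {V : Type*} [Fintype V] [DecidableEq V] {G : SimpleGraph V} [DecidableRel G.Adj]
  {V1 V2 : Finset V} {δ1 δ2 : ℕ} {d : ℕ} {lam : ℕ → ℝ} {E : ℕ → Matrix V V ℝ} {p : ℕ → ℝ[X]}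

theorem dist_of_adj (hB : IsSemiregularBipartition G V1 V2 δ1 δ2) (hconn : G.Connected)
    (u : V) {v w : V} (h : G.Adj v w) :
    G.dist u w = G.dist u v + 1 ∨ G.dist u w + 1 = G.dist u v := by
  have hne : G.dist u w ≠ G.dist u v := fun he => by
    have h1 := hB.even_dist_iff hconn u w
    have h2 := hB.even_dist_iff hconn u v
    have h3 := hB.adj_mem_iff h
    rw [he] at h1
    tauto
  have := h.diff_dist_adj (u := u)
  omega

/-- On the rows indexed by `V1`, the Hoffman polynomial evaluates to a nonzero constant depending
only on the parity of the distance. -/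
theorem exists_hoffman (hB : IsSemiregularBipartition G V1 V2 δ1 δ2) (hconn : G.Connected)
    (h : IsSpectralResolution (G.adjMatrix ℝ) d lam E) (hV1 : V1.Nonempty) (hV2 : V2.Nonempty)
    (hw : ∀ i ≤ d, 0 < (∑ u ∈ V1, E i u u) / (V1.card : ℝ))
    (hp : IsOrthoSeq d lam (fun i => (∑ u ∈ V1, E i u u) / (V1.card : ℝ)) p) :
    ∃ t : ℝ, t ≠ 0 ∧ ∀ u ∈ V1, ∀ v, ∑ j ∈ range (d + 1), aeval (G.adjMatrix ℝ) (p j) u v =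
      if Even (G.dist u v) then 1 else t := by
  obtain ⟨α, β, hα, hβ, hEα, hEβ⟩ := hB.exists_perron hconn h hV1 hV2
  have hcard : (V1.card : ℝ) ≠ 0 := by exact_mod_cast hV1.card_pos.ne'
  have hw0 : (∑ u ∈ V1, E 0 u u) / (V1.card : ℝ) = α := by
    rw [sum_congr rfl fun u hu => hEα u hu u hu, sum_const, nsmul_eq_mul,
      mul_div_cancel_left₀ _ hcard]
  have hH0 := hp.weight_mul_eval_sum h.anti.injOn (Nat.zero_le d)
  rw [if_pos rfl, hw0] at hH0
  have hH : ∀ u v, ∑ j ∈ range (d + 1), aeval (G.adjMatrix ℝ) (p j) u v =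
      (∑ j ∈ range (d + 1), p j).eval (lam 0) * E 0 u v := fun u v => by
    rw [← Matrix.sum_apply, ← map_sum, h.aeval_apply]
    refine sum_eq_single_of_mem 0 (by simp) fun k hk hk0 => ?_
    have hk' : k ≤ d := Nat.lt_succ_iff.1 (mem_range.1 hk)
    have := hp.weight_mul_eval_sum h.anti.injOn hk'
    rw [if_neg hk0] at this
    rw [(mul_eq_zero.1 this).resolve_left (hw k hk').ne', zero_mul]
  refine ⟨(∑ j ∈ range (d + 1), p j).eval (lam 0) * β,
    mul_ne_zero (right_ne_zero_of_mul_eq_one hH0) hβ, fun u hu v => ?_⟩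
  have heven := hB.even_dist_iff hconn u v
  rw [hH]
  split_ifs with hev
  · rw [hEα u hu v ((heven.1 hev).1 hu), mul_comm, hH0]
  · rw [hEβ u hu v fun hv => hev (heven.2 (iff_of_true hu hv))]

theorem aeval_orthoSeq_eq_one (hd : Even d)
    (hp : ∀ i ≤ d, (p i).degree = (i : WithBot ℕ)) {t : ℝ}
    (ht : ∀ u ∈ V1, ∀ v, ∑ j ∈ range (d + 1), aeval (G.adjMatrix ℝ) (p j) u v =
      if Even (G.dist u v) then 1 else t) {u v : V} (hu : u ∈ V1) (huv : G.dist u v = d) :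
    aeval (G.adjMatrix ℝ) (p d) u v = 1 := by
  have h := ht u hu v
  rw [huv, if_pos hd, sum_range_succ, sum_eq_zero, zero_add] at h
  · exact h
  · intro j hj
    have hj' := mem_range.1 hj
    refine aeval_adjMatrix_apply_eq_zero G ?_
    rw [hp j hj'.le, huv]
    exact_mod_cast hj'

/-- The mean excess over `V1` and `p d (lam 0)` differ by a sum of squares. -/
theorem mean_excess_add (h : IsSpectralResolution (G.adjMatrix ℝ) d lam E) (hV1 : V1.Nonempty)
    (hd : Even d) (hp : IsOrthoSeq d lam (fun i => (∑ u ∈ V1, E i u u) / (V1.card : ℝ)) p) {t : ℝ}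
    (ht : ∀ u ∈ V1, ∀ v, ∑ j ∈ range (d + 1), aeval (G.adjMatrix ℝ) (p j) u v =
      if Even (G.dist u v) then 1 else t) :
    (1 / (V1.card : ℝ)) * (∑ u ∈ V1, ((sphere G u d).card : ℝ)) +
      (1 / (V1.card : ℝ)) * (∑ u ∈ V1, ∑ v,
        if G.dist u v = d then 0 else aeval (G.adjMatrix ℝ) (p d) u v ^ 2) =
      (p d).eval (lam 0) := by
  have hcard : (V1.card : ℝ) ≠ 0 := by exact_mod_cast hV1.card_pos.ne'
  have hsum := h.sum_aeval_mul_aeval hV1 (p d) (p d)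
  rw [hp.norm d le_rfl] at hsum
  rw [← mul_add, ← sum_add_distrib]
  field_simp
  rw [← hsum]
  refine sum_congr rfl fun u hu => ?_
  rw [sphere, card_filter, Nat.cast_sum, ← sum_add_distrib]
  refine sum_congr rfl fun v _ => ?_
  split_ifs with huv
  · rw [aeval_orthoSeq_eq_one hd hp.degree_eq ht hu huv]
    norm_num
  · push_cast
    ring

theorem exists_pow_eq_of_isDistRegularAround (hB : IsSemiregularBipartition G V1 V2 δ1 δ2)
    (hconn : G.Connected) (hreg : IsDistRegularAround G V1) (k : ℕ) :
    ∃ a : ℕ → ℝ, ∀ u ∈ V1, ∀ v, (G.adjMatrix ℝ ^ k) u v = a (G.dist u v) := by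
  obtain ⟨c, b, hcb⟩ := hreg
  induction k with
  | zero =>
    refine ⟨fun i => if i = 0 then 1 else 0, fun u _ v => ?_⟩
    rw [pow_zero, one_apply]
    exact if_congr hconn.dist_eq_zero_iff.symm rfl rfl
  | succ k ih =>
    obtain ⟨a, ha⟩ := ih
    refine ⟨fun i => c i * a (i - 1) + b i * a (i + 1), fun u hu v => ?_⟩
    have hunion : G.neighborFinset v = (sphere G u (G.dist u v - 1) ∩ G.neighborFinset v) ∪
        (sphere G u (G.dist u v + 1) ∩ G.neighborFinset v) := by
      ext w
      simp only [mem_union, mem_inter, sphere, mem_filter, mem_univ, true_and,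
        SimpleGraph.mem_neighborFinset]
      constructor
      · intro hvw
        have := hB.dist_of_adj hconn u hvw
        have h' : G.dist u w = G.dist u v - 1 ∨ G.dist u w = G.dist u v + 1 := by omega
        tauto
      · tauto
    have hdisj : Disjoint (sphere G u (G.dist u v - 1) ∩ G.neighborFinset v)
        (sphere G u (G.dist u v + 1) ∩ G.neighborFinset v) := by
      rw [disjoint_left]
      intro w hw hw'
      simp only [mem_inter, sphere, mem_filter, mem_univ, true_and] at hw hw'
      omega
    have hpart : ∀ i, ∑ w ∈ sphere G u i ∩ G.neighborFinset v, (G.adjMatrix ℝ ^ k) u w =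
        (sphere G u i ∩ G.neighborFinset v).card * a i := fun i => by
      rw [← nsmul_eq_mul, ← sum_const]
      refine sum_congr rfl fun w hw => ?_
      rw [ha u hu, (mem_filter.1 (mem_inter.1 hw).1).2]
    rw [pow_succ, SimpleGraph.mul_adjMatrix_apply, hunion, sum_union hdisj, hpart, hpart,
      (hcb u hu v).1, (hcb u hu v).2]

theorem aeval_eq_zero_of_isDistRegularAround (hB : IsSemiregularBipartition G V1 V2 δ1 δ2)
    (hconn : G.Connected) (h : IsSpectralResolution (G.adjMatrix ℝ) d lam E) (hV1 : V1.Nonempty)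
    (hp : IsOrthoSeq d lam (fun i => (∑ u ∈ V1, E i u u) / (V1.card : ℝ)) p)
    (hreg : IsDistRegularAround G V1) :
    ∀ u ∈ V1, ∀ v, G.dist u v ≠ d → aeval (G.adjMatrix ℝ) (p d) u v = 0 := by
  choose a ha using hB.exists_pow_eq_of_isDistRegularAround hconn hreg
  obtain ⟨F, hF⟩ : ∃ F : ℕ → ℝ, ∀ u ∈ V1, ∀ v,
      aeval (G.adjMatrix ℝ) (p d) u v = F (G.dist u v) := by
    refine ⟨fun i => ∑ k ∈ range ((p d).natDegree + 1), (p d).coeff k * a k i, fun u hu v => ?_⟩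
    rw [aeval_eq_sum_range, Matrix.sum_apply]
    exact sum_congr rfl fun k _ => by rw [Matrix.smul_apply, ha k u hu, smul_eq_mul]
  have hlow : ∀ i < d, ∀ u ∈ V1, ∀ v, G.dist u v = i → F i = 0 := by
    intro i
    induction i using Nat.strong_induction_on with
    | _ i ih =>
      intro hi u hu v huv
      by_contra hFi
      have hdeg : (X ^ i : ℝ[X]).degree < (d : WithBot ℕ) := by
        rw [degree_X_pow]
        exact_mod_cast hi
      have horth := h.sum_aeval_mul_aeval hV1 (p d) (X ^ i)
      rw [hp.discInner_eq_zero le_rfl hdeg, mul_zero] at horth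
      have hterm : ∀ x ∈ V1, ∀ y, aeval (G.adjMatrix ℝ) (p d) x y *
          aeval (G.adjMatrix ℝ) (X ^ i : ℝ[X]) x y =
          F i * if G.dist x y = i then (G.adjMatrix ℝ ^ i) x y else 0 := by
        intro x hx y
        rw [aeval_X_pow, hF x hx]
        rcases lt_trichotomy (G.dist x y) i with hlt | heq | hgt
        · rw [ih _ hlt (hlt.trans hi) x hx y rfl, if_neg hlt.ne, zero_mul, mul_zero]
        · rw [if_pos heq, heq]
        · rw [if_neg hgt.ne', adjMatrix_pow_apply_eq_zero G hgt]
          ring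
      rw [sum_congr rfl fun x hx => sum_congr rfl fun y _ => hterm x hx y] at horth
      simp only [← mul_sum] at horth
      have hnonneg : ∀ x y, (0 : ℝ) ≤ if G.dist x y = i then (G.adjMatrix ℝ ^ i) x y else 0 := by
        intro x y
        split_ifs with hxy
        · rw [← hxy]
          exact (adjMatrix_pow_dist_pos G hconn x y).le
        · exact le_rfl
      have hz := (mul_eq_zero.1 horth).resolve_left hFi
      rw [sum_eq_zero_iff_of_nonneg fun x _ => sum_nonneg fun y _ => hnonneg x y] at hz
      have hz' := (sum_eq_zero_iff_of_nonneg fun y _ => hnonneg u y).1 (hz u hu) v (mem_univ v)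
      rw [if_pos huv, ← huv] at hz'
      exact (adjMatrix_pow_dist_pos G hconn u v).ne' hz'
  intro u hu v huv
  rcases huv.lt_or_gt with hlt | hgt
  · rw [hF u hu, hlow _ hlt u hu v rfl]
  · refine aeval_adjMatrix_apply_eq_zero G ?_
    rw [hp.degree_eq d le_rfl]
    exact_mod_cast hgt

/-- If `p d` evaluates to the distance-`d` matrix on the rows indexed by `V1`, then each `p i` is
supported there on the pairs at distance `i`. -/
theorem aeval_orthoSeq_eq_zero (hB : IsSemiregularBipartition G V1 V2 δ1 δ2)
    (hconn : G.Connected) (h : IsSpectralResolution (G.adjMatrix ℝ) d lam E)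
    (hw : ∀ i ≤ d, 0 < (∑ u ∈ V1, E i u u) / (V1.card : ℝ))
    (hp : IsOrthoSeq d lam (fun i => (∑ u ∈ V1, E i u u) / (V1.card : ℝ)) p)
    (hzero : ∀ u ∈ V1, ∀ v, G.dist u v ≠ d → aeval (G.adjMatrix ℝ) (p d) u v = 0) (m : ℕ) :
    ∀ i, i + m = d → ∀ u ∈ V1, ∀ v, G.dist u v ≠ i → aeval (G.adjMatrix ℝ) (p i) u v = 0 := by
  induction m using Nat.strong_induction_on with
  | _ m ih =>
    intro i him u hu v huv
    rcases huv.lt_or_gt with hlt | hgt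
    · rcases Nat.eq_zero_or_pos m with rfl | hm
      · obtain rfl : i = d := by omega
        exact hzero u hu v huv
      · obtain ⟨a, c, ha, hac⟩ := hp.exists_backward h.anti.injOn hw (i := i) (by omega)
        have hentry := congrFun (congrFun (h.aeval_congr hac) u) v
        have hnbr : ∑ w ∈ G.neighborFinset v, aeval (G.adjMatrix ℝ) (p (i + 1)) u w = 0 :=
          sum_eq_zero fun w hw' => by
            have := hB.dist_of_adj hconn u ((SimpleGraph.mem_neighborFinset _ _ _).1 hw')
            exact ih (m - 1) (by omega) (i + 1) (by omega) u hu w (by omega)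
        have hhigh : ∑ j ∈ Ioc i d, aeval (G.adjMatrix ℝ) (C (c j) * p j) u v = 0 :=
          sum_eq_zero fun j hj => by
            have hj' := mem_Ioc.1 hj
            rw [map_mul, aeval_C, ← Algebra.smul_def, Matrix.smul_apply,
              ih (d - j) (by omega) j (by omega) u hu v (by omega), smul_zero]
        rw [mul_comm X, map_mul, aeval_X, SimpleGraph.mul_adjMatrix_apply, hnbr, map_add, map_mul,
          map_sum, Matrix.add_apply, Matrix.sum_apply, hhigh, add_zero, aeval_C, ← Algebra.smul_def,
          Matrix.smul_apply, smul_eq_zero] at hentry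
        exact hentry.resolve_left ha
    · refine aeval_adjMatrix_apply_eq_zero G ?_
      rw [hp.degree_eq i (by omega)]
      exact_mod_cast hgt

theorem isDistRegularAround_of_aeval_eq_zero (hB : IsSemiregularBipartition G V1 V2 δ1 δ2)
    (hconn : G.Connected) (h : IsSpectralResolution (G.adjMatrix ℝ) d lam E)
    (hw : ∀ i ≤ d, 0 < (∑ u ∈ V1, E i u u) / (V1.card : ℝ))
    (hp : IsOrthoSeq d lam (fun i => (∑ u ∈ V1, E i u u) / (V1.card : ℝ)) p) {t : ℝ} (ht0 : t ≠ 0)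
    (ht : ∀ u ∈ V1, ∀ v, ∑ j ∈ range (d + 1), aeval (G.adjMatrix ℝ) (p j) u v =
      if Even (G.dist u v) then 1 else t)
    (hzero : ∀ u ∈ V1, ∀ v, G.dist u v ≠ d → aeval (G.adjMatrix ℝ) (p d) u v = 0) :
    IsDistRegularAround G V1 := by
  set κ : ℕ → ℝ := fun i => if Even i then 1 else t with hκ
  have hκ0 : ∀ i, κ i ≠ 0 := fun i => by
    simp only [hκ]
    split_ifs
    exacts [one_ne_zero, ht0]
  have hsupp : ∀ j ≤ d, ∀ u ∈ V1, ∀ v, G.dist u v ≠ j → aeval (G.adjMatrix ℝ) (p j) u v = 0 :=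
    fun j hj => hB.aeval_orthoSeq_eq_zero hconn h hw hp hzero (d - j) j (by omega)
  have hdist : ∀ u ∈ V1, ∀ v, G.dist u v ≤ d := by
    intro u hu v
    by_contra! hlt
    refine hκ0 (G.dist u v) ((ht u hu v).symm.trans (sum_eq_zero fun j hj => ?_))
    have := mem_range.1 hj
    exact hsupp j (by omega) u hu v (by omega)
  have hp_apply : ∀ j ≤ d, ∀ u ∈ V1, ∀ v,
      aeval (G.adjMatrix ℝ) (p j) u v = if G.dist u v = j then κ j else 0 := by
    intro j hj u hu v
    split_ifs with huv
    · have hsum := ht u hu v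
      rw [huv, sum_eq_single_of_mem j (mem_range.2 (Nat.lt_succ_of_le hj))] at hsum
      · exact hsum
      · exact fun k hk hkj => hsupp k (Nat.lt_succ_iff.1 (mem_range.1 hk)) u hu v (huv ▸ hkj.symm)
    · exact hsupp j hj u hu v huv
  have hpoly : ∀ f : ℝ[X], ∀ u ∈ V1, ∀ v, ∀ u' ∈ V1, ∀ v', G.dist u v = G.dist u' v' →
      aeval (G.adjMatrix ℝ) f u v = aeval (G.adjMatrix ℝ) f u' v' := by
    intro f u hu v u' hu' v' he
    obtain ⟨g, hg, hgf⟩ := exists_degree_lt_eval_eq d lam f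
    obtain ⟨c, rfl⟩ := exists_expansion hp.degree_eq (d + 1) le_rfl g hg
    rw [← h.aeval_congr hgf, map_sum, Matrix.sum_apply, Matrix.sum_apply]
    refine sum_congr rfl fun j hj => ?_
    have hj' : j ≤ d := Nat.lt_succ_iff.1 (mem_range.1 hj)
    rw [map_mul, aeval_C, ← Algebra.smul_def, Matrix.smul_apply, Matrix.smul_apply,
      hp_apply j hj' u hu, hp_apply j hj' u' hu', he]
  have hcount : ∀ i, ∀ u ∈ V1, ∀ v, ∀ u' ∈ V1, ∀ v', G.dist u v = G.dist u' v' →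
      (sphere G u i ∩ G.neighborFinset v).card = (sphere G u' i ∩ G.neighborFinset v').card := by
    intro i u hu v u' hu' v' he
    by_cases hi : i ≤ d
    · have hcard : ∀ x ∈ V1, ∀ y, aeval (G.adjMatrix ℝ) (p i * X) x y =
          (sphere G x i ∩ G.neighborFinset y).card * κ i := by
        intro x hx y
        rw [map_mul, aeval_X, SimpleGraph.mul_adjMatrix_apply,
          sum_congr rfl fun w _ => hp_apply i hi x hx w, ← sum_filter, sum_const, nsmul_eq_mul,
          inter_comm, sphere, inter_filter, inter_univ]
      have := hpoly (p i * X) u hu v u' hu' v' he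
      rw [hcard u hu, hcard u' hu'] at this
      exact_mod_cast mul_right_cancel₀ (hκ0 i) this
    · have hempty : ∀ x ∈ V1, sphere G x i = ∅ := fun x hx =>
        filter_eq_empty_iff.2 fun y _ hy => hi (hy ▸ hdist x hx y)
      rw [hempty u hu, hempty u' hu', empty_inter, empty_inter]
  have hfactor : ∀ φ : ℕ → ℕ, ∃ c : ℕ → ℕ, ∀ u ∈ V1, ∀ v,
      (sphere G u (φ (G.dist u v)) ∩ G.neighborFinset v).card = c (G.dist u v) := by
    intro φ
    obtain ⟨c, hc⟩ := (Function.factorsThrough_iff (f := fun x : V1 × V => G.dist x.1 x.2)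
      (fun x : V1 × V => (sphere G x.1 (φ (G.dist x.1 x.2)) ∩ G.neighborFinset x.2).card)).1
      fun x y hxy => by
        have hxy' : G.dist x.1 x.2 = G.dist y.1 y.2 := hxy
        dsimp only
        rw [hxy']
        exact hcount _ _ x.1.2 _ _ y.1.2 _ hxy'
    exact ⟨c, fun u hu v => congrFun hc (⟨u, hu⟩, v)⟩
  obtain ⟨c, hc⟩ := hfactor (· - 1)
  obtain ⟨b, hb⟩ := hfactor (· + 1)
  exact ⟨c, b, fun u hu v => ⟨hc u hu v, hb u hu v⟩⟩

/-- The spectral excess inequality for one stable set, with its case of equality. -/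
theorem exists_excess_defect (hB : IsSemiregularBipartition G V1 V2 δ1 δ2) (hconn : G.Connected)
    (h : IsSpectralResolution (G.adjMatrix ℝ) d lam E) (hd : Even d)
    (hm0 : ∑ i ∈ (range (d + 1)).filter (fun i => lam i = 0), trace (E i) ≠
      |(V1.card : ℝ) - (V2.card : ℝ)|)
    (hp : IsOrthoSeq d lam (fun i => (∑ u ∈ V1, E i u u) / (V1.card : ℝ)) p) :
    ∃ ε : ℝ, 0 ≤ ε ∧ (1 / (V1.card : ℝ)) * (∑ u ∈ V1, ((sphere G u d).card : ℝ)) + ε =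
      (p d).eval (lam 0) ∧ (IsDistRegularAround G V1 ↔ ε = 0) := by
  have hV1 := hB.left_nonempty h hm0
  have hV2 := hB.swap.left_nonempty h (by rwa [abs_sub_comm])
  have hcard : (0 : ℝ) < V1.card := by exact_mod_cast hV1.card_pos
  have hw : ∀ i ≤ d, 0 < (∑ u ∈ V1, E i u u) / (V1.card : ℝ) := fun i hi =>
    div_pos (hB.sum_diag_pos h hm0 hi) hcard
  obtain ⟨t, ht0, ht⟩ := hB.exists_hoffman hconn h hV1 hV2 hw hp
  have hterm : ∀ u v, 0 ≤ if G.dist u v = d then 0 else aeval (G.adjMatrix ℝ) (p d) u v ^ 2 :=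
    fun u v => by split_ifs <;> positivity
  refine ⟨_, ?_, mean_excess_add h hV1 hd hp ht, ?_⟩
  · exact mul_nonneg (by positivity) (sum_nonneg fun u _ => sum_nonneg fun v _ => hterm u v)
  · rw [mul_eq_zero, or_iff_right (one_div_pos.2 hcard).ne',
      sum_eq_zero_iff_of_nonneg fun u _ => sum_nonneg fun v _ => hterm u v]
    constructor
    · intro hreg u hu
      refine sum_eq_zero fun v _ => ?_
      split_ifs with huv
      · rfl
      · rw [hB.aeval_eq_zero_of_isDistRegularAround hconn h hV1 hp hreg u hu v huv, sq, zero_mul]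
    · intro hz
      refine hB.isDistRegularAround_of_aeval_eq_zero hconn h hw hp ht0 ht fun u hu v huv => ?_
      have := (sum_eq_zero_iff_of_nonneg fun v _ => hterm u v).1 (hz u hu) v (mem_univ v)
      rwa [if_neg huv, sq_eq_zero_iff] at this

end IsSemiregularBipartition

/-- Final observation: in case (b), the two conditions can be added up into the single
condition `k̄_{1,d} + k̄_{2,d} = p_{1,d}(λ_0) + p_{2,d}(λ_0)`, which still
characterizes distance-biregularity. -/
theorem stmt_17 {V : Type*} [Fintype V] [DecidableEq V]
    (G : SimpleGraph V) [DecidableRel G.Adj] (hconn : G.Connected)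
    (V1 V2 : Finset V) (hcover : V1 ∪ V2 = Finset.univ) (hdisj : Disjoint V1 V2)
    (hind1 : ∀ u ∈ V1, ∀ v ∈ V1, ¬ G.Adj u v)
    (hind2 : ∀ u ∈ V2, ∀ v ∈ V2, ¬ G.Adj u v)
    (δ1 δ2 : ℕ)
    (hdeg1 : ∀ u ∈ V1, G.degree u = δ1) (hdeg2 : ∀ v ∈ V2, G.degree v = δ2)
    (d : ℕ) (lam : ℕ → ℝ) (hlam : StrictAntiOn lam (Set.Iic d))
    (E : ℕ → Matrix V V ℝ)
    (hsym : ∀ i ≤ d, (E i).IsSymm)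
    (hsum : ∑ i ∈ Finset.range (d + 1), E i = 1)
    (hmul : ∀ i ≤ d, ∀ j ≤ d, E i * E j = if i = j then E i else 0)
    (heig : ∀ i ≤ d, G.adjMatrix ℝ * E i = lam i • E i)
    (hnz : ∀ i ≤ d, E i ≠ 0)
    (hEven : Even d)
    -- `m(0) ≠ |n₁ − n₂|`
    (hm0 : ∑ i ∈ (Finset.range (d + 1)).filter (fun i => lam i = 0),
        Matrix.trace (E i) ≠ |(V1.card : ℝ) - (V2.card : ℝ)|)
    -- the orthogonal polynomials for `⟨·,·⟩_{V₁}`, with weights `w_{1,i}`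
    (p1 : ℕ → Polynomial ℝ)
    (hp1deg : ∀ i ≤ d, (p1 i).degree = (i : WithBot ℕ))
    (hp1orth : ∀ i ≤ d, ∀ j ≤ d, i ≠ j →
      discInner (Finset.range (d + 1)) lam
        (fun i => (∑ u ∈ V1, E i u u) / (V1.card : ℝ)) (p1 i) (p1 j) = 0)
    (hp1norm : ∀ i ≤ d,
      discInner (Finset.range (d + 1)) lam
          (fun i => (∑ u ∈ V1, E i u u) / (V1.card : ℝ)) (p1 i) (p1 i)
        = (p1 i).eval (lam 0))
    -- the orthogonal polynomials for `⟨·,·⟩_{V₂}`, with weights `w_{2,i}`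
    (p2 : ℕ → Polynomial ℝ)
    (hp2deg : ∀ i ≤ d, (p2 i).degree = (i : WithBot ℕ))
    (hp2orth : ∀ i ≤ d, ∀ j ≤ d, i ≠ j →
      discInner (Finset.range (d + 1)) lam
        (fun i => (∑ v ∈ V2, E i v v) / (V2.card : ℝ)) (p2 i) (p2 j) = 0)
    (hp2norm : ∀ i ≤ d,
      discInner (Finset.range (d + 1)) lam
          (fun i => (∑ v ∈ V2, E i v v) / (V2.card : ℝ)) (p2 i) (p2 i)
        = (p2 i).eval (lam 0)) :
    IsDistBiregularOn G V1 V2 ↔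
      (1 / (V1.card : ℝ)) * (∑ u ∈ V1, ((sphere G u d).card : ℝ))
          + (1 / (V2.card : ℝ)) * (∑ v ∈ V2, ((sphere G v d).card : ℝ))
        = (p1 d).eval (lam 0) + (p2 d).eval (lam 0) := by
  have hB : IsSemiregularBipartition G V1 V2 δ1 δ2 :=
    ⟨hcover, hdisj, hind1, hind2, hdeg1, hdeg2⟩
  have h : IsSpectralResolution (G.adjMatrix ℝ) d lam E := ⟨hlam, hsym, hsum, hmul, heig, hnz⟩
  obtain ⟨ε1, hε1, hadd1, hiff1⟩ := hB.exists_excess_defect hconn h hEven hm0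
    ⟨hp1deg, hp1orth, hp1norm⟩
  obtain ⟨ε2, hε2, hadd2, hiff2⟩ := hB.swap.exists_excess_defect hconn h hEven
    (by rwa [abs_sub_comm]) ⟨hp2deg, hp2orth, hp2norm⟩
  rw [isDistBiregularOn_iff, hiff1, hiff2, ← hadd1, ← hadd2]
  constructor
  · rintro ⟨rfl, rfl⟩
    ring
  · intro he
    constructor <;> linarith
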